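/- Fix an integer p ≥ 2 and 0 ≤ α ≤ p−1. Then the level set E(α) = {x ∈ [0,1] : lim_{n→∞} S_n(x)/n exists and equals α} has Hausdorff dimension h(α). -/

import Mathlib

open Filter MeasureTheory Set
open scoped ENNReal

noncomputable section

/-- Number of words of length `n` over the alphabet `{0, …, p-1}` whose digit sum lies
strictly between `n(α-δ)` and `n(α+δ)`; this is `h(α,n,δ)`. -/
def hcount (p n : ℕ) (α δ : ℝ) : ℕ :=
  Nat.card {w : Fin n → Fin p //
    (n : ℝ) * (α - δ) < ∑ i, ((w i : ℕ) : ℝ) ∧ (∑ i, ((w i : ℕ) : ℝ)) < n * (α + δ)}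

/-- The `p`-adic entropy function
`h(α) = lim_{δ→0} limsup_{n→∞} log h(α,n,δ) / (n log p)`.
Since the inner quantity is nondecreasing in `δ`, the limit as `δ → 0⁺` equals the
infimum over `δ > 0`. -/
def entropy (p : ℕ) (α : ℝ) : ℝ :=
  ⨅ δ : {δ : ℝ // 0 < δ},
    limsup (fun n : ℕ => Real.log (hcount p n α δ) / (n * Real.log p)) atTop

/-- Number of words of length `n` over `{0, …, p-1}` with digit sum `< n(α+δ)`;
this is `h̄(α,n,δ)`. -/
def hbarCount (p n : ℕ) (α δ : ℝ) : ℕ :=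
  Nat.card {w : Fin n → Fin p // (∑ i, ((w i : ℕ) : ℝ)) < n * (α + δ)}

/-- The `p`-adic upper entropy function
`h̄(α) = lim_{δ→0} limsup_{n→∞} log h̄(α,n,δ) / (n log p)`, the limit in `δ`
being the infimum over `δ > 0` by monotonicity in `δ`. -/
def upperEntropy (p : ℕ) (α : ℝ) : ℝ :=
  ⨅ δ : {δ : ℝ // 0 < δ},
    limsup (fun n : ℕ => Real.log (hbarCount p n α δ) / (n * Real.log p)) atTop

/-- Number of words of length `n` over `{0, …, p-1}` with digit sum `> n(α-δ)`;
this is `h̲(α,n,δ)`. -/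
def hlowCount (p n : ℕ) (α δ : ℝ) : ℕ :=
  Nat.card {w : Fin n → Fin p // (n : ℝ) * (α - δ) < ∑ i, ((w i : ℕ) : ℝ)}

/-- The `p`-adic lower entropy function
`h̲(α) = lim_{δ→0} liminf_{n→∞} log h̲(α,n,δ) / (n log p)`, the limit in `δ`
being the infimum over `δ > 0` by monotonicity in `δ`. -/
def lowerEntropy (p : ℕ) (α : ℝ) : ℝ :=
  ⨅ δ : {δ : ℝ // 0 < δ},
    liminf (fun n : ℕ => Real.log (hlowCount p n α δ) / (n * Real.log p)) atTop

/-- The `(n+1)`-th digit `x_{n+1} ∈ {0,…,p-1}` of the non-terminating `p`-adic expansion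
`x = 0.x₁x₂x₃…` of `x ∈ [0,1]` (the expansion not ending in all zeros). -/
def padicDigit (p : ℕ) (x : ℝ) (n : ℕ) : ℤ :=
  (⌈x * p ^ (n + 1)⌉ - 1) - p * (⌈x * p ^ n⌉ - 1)

/-- `S_n(T^m x) = x_{m+1} + ⋯ + x_{m+n}`, the digit sum of length `n` after shifting
`m` times. In particular `msum p x 0 n = S_n(x)`. -/
def msum (p : ℕ) (x : ℝ) (m n : ℕ) : ℤ :=
  ∑ i ∈ Finset.range n, padicDigit p x (m + i)

/-- The `n`-th lower moving digit mean `M̲ₙ(x) = liminf_{m→∞} S_n(T^m x)/n`. -/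
def lowerMn (p : ℕ) (x : ℝ) (n : ℕ) : ℝ :=
  liminf (fun m : ℕ => (msum p x m n : ℝ) / n) atTop

/-- The `n`-th upper moving digit mean `M̄ₙ(x) = limsup_{m→∞} S_n(T^m x)/n`. -/
def upperMn (p : ℕ) (x : ℝ) (n : ℕ) : ℝ :=
  limsup (fun m : ℕ => (msum p x m n : ℝ) / n) atTop

/-- The lower moving digit mean `M̲(x) = lim_{n→∞} M̲ₙ(x)`; the limit exists by
subadditivity, hence equals the `liminf`. -/
def lowerM (p : ℕ) (x : ℝ) : ℝ := liminf (fun n : ℕ => lowerMn p x n) atTop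

/-- The upper moving digit mean `M̄(x) = lim_{n→∞} M̄ₙ(x)`; the limit exists by
subadditivity, hence equals the `limsup`. -/
def upperM (p : ℕ) (x : ℝ) : ℝ := limsup (fun n : ℕ => upperMn p x n) atTop

/-- The lower digit mean `A̲(x) = liminf_{n→∞} S_n(x)/n`. -/
def lowerA (p : ℕ) (x : ℝ) : ℝ := liminf (fun n : ℕ => (msum p x 0 n : ℝ) / n) atTop

/-- The upper digit mean `Ā(x) = limsup_{n→∞} S_n(x)/n`. -/
def upperA (p : ℕ) (x : ℝ) : ℝ := limsup (fun n : ℕ => (msum p x 0 n : ℝ) / n) atTop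

/-- The Banach set `B(α,β) = {x ∈ [0,1] : M̲(x) = α, M̄(x) = β}`. -/
def BanachSet (p : ℕ) (α β : ℝ) : Set ℝ :=
  {x | x ∈ Icc (0 : ℝ) 1 ∧ lowerM p x = α ∧ upperM p x = β}

/-- The level set `E(α) = {x ∈ [0,1] : lim_{n→∞} S_n(x)/n = α}` of the arithmetic digit
mean. -/
def digitMeanLevelSet (p : ℕ) (α : ℝ) : Set ℝ :=
  {x | x ∈ Icc (0 : ℝ) 1 ∧
    Tendsto (fun n : ℕ => (msum p x 0 n : ℝ) / n) atTop (nhds α)}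

lemma padicDigit_nonneg {p : ℕ} (hp : 0 < p) (x : ℝ) (n : ℕ) : 0 ≤ padicDigit p x n := by
  have h := Int.ceil_lt_add_one (x * (p : ℝ) ^ n)
  have hp' : (0 : ℝ) < p := by exact_mod_cast hp
  have h2 : (p : ℤ) * (⌈x * (p : ℝ) ^ n⌉ - 1) < ⌈x * (p : ℝ) ^ (n + 1)⌉ := by
    rw [Int.lt_ceil]
    push_cast
    rw [pow_succ]
    nlinarith
  unfold padicDigit
  linarith [Int.add_one_le_iff.2 h2]

lemma padicDigit_lt {p : ℕ} (hp : 0 < p) (x : ℝ) (n : ℕ) : padicDigit p x n < p := by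
  have h := Int.le_ceil (x * (p : ℝ) ^ n)
  have hp' : (0 : ℝ) < p := by exact_mod_cast hp
  have h2 : ⌈x * (p : ℝ) ^ (n + 1)⌉ ≤ (p : ℤ) * ⌈x * (p : ℝ) ^ n⌉ := by
    rw [Int.ceil_le]
    push_cast
    rw [pow_succ]
    nlinarith
  unfold padicDigit
  linarith

lemma ceil_eq_one_of_mem_Ioc {x : ℝ} (hx : x ∈ Ioc (0 : ℝ) 1) : ⌈x⌉ = 1 := by
  rw [Int.ceil_eq_iff]
  simpa using hx

lemma ceil_mul_pow_eq_of_padicDigit_eq {p : ℕ} {x y : ℝ} (hx : x ∈ Ioc (0 : ℝ) 1)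
    (hy : y ∈ Ioc (0 : ℝ) 1) {n : ℕ} (h : ∀ i < n, padicDigit p x i = padicDigit p y i) :
    ⌈x * (p : ℝ) ^ n⌉ = ⌈y * (p : ℝ) ^ n⌉ := by
  induction n with
  | zero => simp [ceil_eq_one_of_mem_Ioc hx, ceil_eq_one_of_mem_Ioc hy]
  | succ n ih =>
    have h1 := h n n.lt_succ_self
    have h2 := ih fun i hi => h i (by omega)
    unfold padicDigit at h1
    rw [h2] at h1
    linarith

/-- The points of `(0, 1]` whose `p`-adic expansion starts with the word `w`. -/
def digitCylinder (p n : ℕ) (w : Fin n → Fin p) : Set ℝ :=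
  {x | x ∈ Ioc (0 : ℝ) 1 ∧ ∀ i : Fin n, padicDigit p x i = ((w i : ℕ) : ℤ)}

lemma ediam_digitCylinder_le {p : ℕ} (hp : 0 < p) (n : ℕ) (w : Fin n → Fin p) :
    Metric.ediam (digitCylinder p n w) ≤ ENNReal.ofReal (((p : ℝ) ^ n)⁻¹) := by
  refine Metric.ediam_le fun x hx y hy => ?_
  rw [edist_dist]
  refine ENNReal.ofReal_le_ofReal ?_
  have hc := ceil_mul_pow_eq_of_padicDigit_eq (p := p) hx.1 hy.1 (n := n)
    fun i hi => (hx.2 ⟨i, hi⟩).trans (hy.2 ⟨i, hi⟩).symm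
  have hpos : (0 : ℝ) < (p : ℝ) ^ n := by positivity
  have hc' : (⌈x * (p : ℝ) ^ n⌉ : ℝ) = ⌈y * (p : ℝ) ^ n⌉ := by rw [hc]
  have h1 : |x * (p : ℝ) ^ n - y * (p : ℝ) ^ n| ≤ 1 := by
    rw [abs_le]
    constructor <;> linarith [Int.le_ceil (x * (p : ℝ) ^ n), Int.le_ceil (y * (p : ℝ) ^ n),
      Int.ceil_lt_add_one (x * (p : ℝ) ^ n), Int.ceil_lt_add_one (y * (p : ℝ) ^ n)]
  rw [← sub_mul, abs_mul, abs_of_pos hpos] at h1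
  rwa [Real.dist_eq, inv_eq_one_div, le_div_iff₀ hpos]

/-- The words counted by `hcount`. -/
abbrev MeanWord (p n : ℕ) (α δ : ℝ) : Type :=
  {w : Fin n → Fin p //
    (n : ℝ) * (α - δ) < ∑ i, ((w i : ℕ) : ℝ) ∧ (∑ i, ((w i : ℕ) : ℝ)) < n * (α + δ)}

lemma mem_iUnion_digitCylinder {p : ℕ} (hp : 0 < p) {x α δ : ℝ} (hx : x ∈ Ioc (0 : ℝ) 1) {n : ℕ}
    (hn : 0 < n) (h : |(msum p x 0 n : ℝ) / n - α| < δ) :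
    x ∈ ⋃ w : MeanWord p n α δ, digitCylinder p n w := by
  have hdig : ∀ i, ∃ d : Fin p, padicDigit p x i = ((d : ℕ) : ℤ) := fun i =>
    ⟨⟨(padicDigit p x i).toNat, by
      have := padicDigit_lt hp x i
      have := padicDigit_nonneg hp x i
      omega⟩, by simp [padicDigit_nonneg hp x i]⟩
  choose d hd using hdig
  have hsum : (msum p x 0 n : ℝ) = ∑ i : Fin n, ((d i : ℕ) : ℝ) := by
    rw [Fin.sum_univ_eq_sum_range (fun i => ((d i : ℕ) : ℝ)), msum]
    simp [hd]
  have hn' : (0 : ℝ) < n := by exact_mod_cast hn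
  rw [hsum, abs_sub_lt_iff, sub_lt_iff_lt_add', sub_lt_comm, lt_div_iff₀ hn',
    div_lt_iff₀ hn'] at h
  exact mem_iUnion.2 ⟨⟨fun i => d i, by rw [mul_comm]; exact h.2, by rw [mul_comm]; exact h.1⟩,
    hx, fun i => hd i⟩

lemma hcount_le_pow (p n : ℕ) (α δ : ℝ) : hcount p n α δ ≤ p ^ n := by
  have h := Nat.card_le_card_of_injective (Subtype.val : MeanWord p n α δ → Fin n → Fin p)
    Subtype.val_injective
  simpa [hcount] using h

/-- The normalised logarithm of `hcount` whose upper limit defines the entropy. -/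
abbrev hrate (p : ℕ) (α δ : ℝ) (n : ℕ) : ℝ :=
  Real.log (hcount p n α δ) / (n * Real.log p)

lemma log_natCast_pos {p : ℕ} (hp : 2 ≤ p) : 0 < Real.log p :=
  Real.log_pos (by exact_mod_cast hp)

lemma hrate_nonneg (p : ℕ) (α δ : ℝ) (n : ℕ) : 0 ≤ hrate p α δ n :=
  div_nonneg (Real.log_natCast_nonneg _)
    (mul_nonneg n.cast_nonneg (Real.log_natCast_nonneg _))

lemma hrate_le_one {p : ℕ} (hp : 2 ≤ p) (α δ : ℝ) (n : ℕ) : hrate p α δ n ≤ 1 := by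
  have hlp := log_natCast_pos hp
  refine div_le_one_of_le₀ ?_ (by positivity)
  rcases Nat.eq_zero_or_pos (hcount p n α δ) with h | h
  · rw [h]; simp; positivity
  · rw [← Real.log_pow]
    exact Real.log_le_log (by exact_mod_cast h) (by exact_mod_cast hcount_le_pow p n α δ)

lemma isBoundedUnder_hrate {p : ℕ} (hp : 2 ≤ p) (α δ : ℝ) :
    IsBoundedUnder (· ≤ ·) atTop (hrate p α δ) :=
  isBoundedUnder_of ⟨1, hrate_le_one hp α δ⟩

lemma isCoboundedUnder_hrate (p : ℕ) (α δ : ℝ) :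
    IsCoboundedUnder (· ≤ ·) atTop (hrate p α δ) :=
  (isBoundedUnder_of ⟨0, hrate_nonneg p α δ⟩ :
    IsBoundedUnder (· ≥ ·) atTop (hrate p α δ)).isCoboundedUnder_le

lemma limsup_hrate_nonneg {p : ℕ} (hp : 2 ≤ p) (α δ : ℝ) : 0 ≤ limsup (hrate p α δ) atTop :=
  le_limsup_of_frequently_le (Frequently.of_forall (hrate_nonneg p α δ))
    (isBoundedUnder_hrate hp α δ)

lemma entropy_le_limsup {p : ℕ} (hp : 2 ≤ p) (α : ℝ) {δ : ℝ} (hδ : 0 < δ) :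
    entropy p α ≤ limsup (hrate p α δ) atTop :=
  ciInf_le (f := fun δ : {δ : ℝ // 0 < δ} => limsup (hrate p α δ) atTop)
    ⟨0, by rintro _ ⟨δ, rfl⟩; exact limsup_hrate_nonneg hp α δ⟩ ⟨δ, hδ⟩

lemma hausdorffMeasure_meanBounded_eq_zero {p : ℕ} (hp : 2 ≤ p) {α δ s : ℝ}
    (hs : limsup (hrate p α δ) atTop < s) (N : ℕ) :
    μH[s] {x : ℝ | x ∈ Ioc (0 : ℝ) 1 ∧ ∀ n ≥ N, |(msum p x 0 n : ℝ) / n - α| < δ} = 0 := by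
  classical
  obtain ⟨t, ht, hts⟩ := exists_between hs
  have hs0 : 0 ≤ s := (limsup_hrate_nonneg hp α δ).trans hs.le
  have hp0 : 0 < p := by omega
  have hpR : (1 : ℝ) < p := by exact_mod_cast hp
  have hlp := log_natCast_pos hp
  have hcov := Measure.hausdorffMeasure_le_liminf_sum s
    {x : ℝ | x ∈ Ioc (0 : ℝ) 1 ∧ ∀ n ≥ N, |(msum p x 0 n : ℝ) / n - α| < δ}
    (l := atTop) (fun n : ℕ => ENNReal.ofReal (((p : ℝ) ^ n)⁻¹)) (by
      rw [← ENNReal.ofReal_zero]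
      refine ENNReal.tendsto_ofReal ?_
      exact tendsto_inv_atTop_zero.comp (tendsto_pow_atTop_atTop_of_one_lt hpR))
    (fun n (w : MeanWord p n α δ) => digitCylinder p n w)
    (Eventually.of_forall fun n w => ediam_digitCylinder_le hp0 n w) (by
      filter_upwards [eventually_ge_atTop N, eventually_gt_atTop 0] with n hn hn0 x hx
      exact mem_iUnion_digitCylinder hp0 hx.1 hn0 (hx.2 n hn))
  refine le_antisymm (hcov.trans ?_) bot_le
  have hlim : Tendsto (fun n : ℕ => ENNReal.ofReal (((p : ℝ) ^ (t - s)) ^ n)) atTop (nhds 0) := by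
    rw [← ENNReal.ofReal_zero]
    refine ENNReal.tendsto_ofReal (tendsto_pow_atTop_nhds_zero_of_lt_one (by positivity) ?_)
    exact Real.rpow_lt_one_of_one_lt_of_neg hpR (by linarith)
  rw [← hlim.liminf_eq]
  refine liminf_le_liminf ?_
  filter_upwards [eventually_lt_of_limsup_lt ht (isBoundedUnder_hrate hp α δ),
    eventually_gt_atTop 0] with n hn hn0
  have hn0' : (0 : ℝ) < n := by exact_mod_cast hn0
  have hcard : (hcount p n α δ : ℝ) ≤ (p : ℝ) ^ (t * n) := by
    rcases Nat.eq_zero_or_pos (hcount p n α δ) with h | h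
    · rw [h]; simp; positivity
    · rw [div_lt_iff₀ (by positivity)] at hn
      rw [← Real.log_le_log_iff (by exact_mod_cast h) (by positivity),
        Real.log_rpow (by positivity)]
      linarith
  calc ∑ w : MeanWord p n α δ, Metric.ediam (digitCylinder p n w) ^ s
      ≤ ∑ _w : MeanWord p n α δ, ENNReal.ofReal (((p : ℝ) ^ n)⁻¹) ^ s :=
        Finset.sum_le_sum fun w _ =>
          ENNReal.rpow_le_rpow (ediam_digitCylinder_le hp0 n w) hs0
    _ = ENNReal.ofReal (hcount p n α δ * (((p : ℝ) ^ n)⁻¹) ^ s) := by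
        rw [Finset.sum_const, nsmul_eq_mul, Finset.card_univ, ← Nat.card_eq_fintype_card,
          ENNReal.ofReal_mul (by positivity), ENNReal.ofReal_natCast,
          ENNReal.ofReal_rpow_of_pos (by positivity)]
        rfl
    _ ≤ ENNReal.ofReal (((p : ℝ) ^ (t - s)) ^ n) := by
        refine ENNReal.ofReal_le_ofReal ?_
        calc (hcount p n α δ : ℝ) * (((p : ℝ) ^ n)⁻¹) ^ s
            ≤ (p : ℝ) ^ (t * n) * (((p : ℝ) ^ n)⁻¹) ^ s := by gcongr
          _ = ((p : ℝ) ^ (t - s)) ^ n := by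
            rw [← Real.rpow_natCast, ← Real.rpow_neg (by positivity), ← Real.rpow_mul (by positivity),
              ← Real.rpow_add (by positivity), ← Real.rpow_natCast,
              ← Real.rpow_mul (by positivity)]
            congr 1
            ring

lemma dimH_digitMeanLevelSet_le {p : ℕ} (hp : 2 ≤ p) (α : ℝ) :
    dimH (digitMeanLevelSet p α) ≤ ENNReal.ofReal (entropy p α) := by
  refine le_of_forall_gt_imp_ge_of_dense fun a ha => ?_
  obtain ⟨s, hs, hsa⟩ := ENNReal.lt_iff_exists_nnreal_btwn.1 ha
  refine le_trans ?_ hsa.le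
  have hs' : entropy p α < s := by
    rw [← ENNReal.ofReal_coe_nnreal] at hs
    exact (ENNReal.ofReal_lt_ofReal_iff'.1 hs).1
  have : Nonempty {δ : ℝ // 0 < δ} := ⟨⟨1, one_pos⟩⟩
  obtain ⟨⟨δ, hδ⟩, hlt⟩ := exists_lt_of_ciInf_lt hs'
  have hsub : digitMeanLevelSet p α ⊆ {0} ∪ ⋃ N : ℕ,
      {x : ℝ | x ∈ Ioc (0 : ℝ) 1 ∧ ∀ n ≥ N, |(msum p x 0 n : ℝ) / n - α| < δ} := by
    rintro x ⟨hx, hlim⟩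
    rcases hx.1.eq_or_lt with h | h
    · exact Or.inl h.symm
    · obtain ⟨N, hN⟩ := Metric.tendsto_atTop.1 hlim δ hδ
      exact Or.inr (mem_iUnion.2 ⟨N, ⟨h, hx.2⟩, fun n hn => hN n hn⟩)
  refine (dimH_mono hsub).trans ?_
  rw [dimH_union, dimH_singleton, dimH_iUnion]
  refine max_le bot_le (iSup_le fun N => dimH_le_of_hausdorffMeasure_ne_top ?_)
  rw [hausdorffMeasure_meanBounded_eq_zero hp hlt N]
  exact ENNReal.zero_ne_top

/-- The partition function `∑ⱼ e^{lj}` of the digit alphabet. -/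
def digitPartition (p : ℕ) (l : ℝ) : ℝ := ∑ j : Fin p, Real.exp (l * (j : ℕ))

/-- The entropy (to base `e`) of the Gibbs weights `e^{lj} / ∑ᵢ e^{li}` when their mean is `α`. -/
def gibbsEntropy (p : ℕ) (l α : ℝ) : ℝ := Real.log (digitPartition p l) - l * α

lemma exp_le_digitPartition {p : ℕ} (l : ℝ) (j : Fin p) :
    Real.exp (l * (j : ℕ)) ≤ digitPartition p l :=
  Finset.single_le_sum (f := fun j : Fin p => Real.exp (l * (j : ℕ)))
    (fun _ _ => (Real.exp_pos _).le) (Finset.mem_univ j)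

lemma digitPartition_pos {p : ℕ} (hp : 0 < p) (l : ℝ) : 0 < digitPartition p l :=
  (Real.exp_pos _).trans_le (exp_le_digitPartition l ⟨0, hp⟩)

lemma gibbsEntropy_nonneg {p : ℕ} (hp : 0 < p) (l : ℝ) {α : ℝ} (hα : 0 ≤ α)
    (hα' : α ≤ (p : ℝ) - 1) : 0 ≤ gibbsEntropy p l α := by
  rw [gibbsEntropy, sub_nonneg, Real.le_log_iff_exp_le (digitPartition_pos hp l)]
  rcases le_total 0 l with hl | hl
  · refine le_trans ?_ (exp_le_digitPartition l ⟨p - 1, by omega⟩)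
    rw [Real.exp_le_exp, Nat.cast_sub hp, Nat.cast_one]
    exact mul_le_mul_of_nonneg_left hα' hl
  · refine le_trans ?_ (exp_le_digitPartition l ⟨0, hp⟩)
    rw [Real.exp_le_exp]
    simpa using mul_nonpos_of_nonpos_of_nonneg hl hα

lemma hcount_le_exp {p : ℕ} (hp : 0 < p) (l α δ : ℝ) (n : ℕ) :
    (hcount p n α δ : ℝ) ≤ Real.exp (n * (gibbsEntropy p l α + |l| * δ)) := by
  classical
  have hZ := digitPartition_pos hp l
  have hsum : ∑ w : Fin n → Fin p, Real.exp (l * ∑ i, ((w i : ℕ) : ℝ)) =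
      digitPartition p l ^ n := by
    simp_rw [digitPartition, Fintype.sum_pow, Finset.mul_sum, Real.exp_sum]
  have hword : ∀ w : MeanWord p n α δ,
      1 ≤ Real.exp (n * (|l| * δ - l * α)) * Real.exp (l * ∑ i, ((w.1 i : ℕ) : ℝ)) := by
    rintro ⟨w, h1, h2⟩
    rw [← Real.exp_add, Real.one_le_exp_iff]
    have habs : |(∑ i, ((w i : ℕ) : ℝ)) - n * α| ≤ n * δ := by
      rw [abs_le]; constructor <;> nlinarith
    have h3 := neg_abs_le (l * ((∑ i, ((w i : ℕ) : ℝ)) - n * α))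
    rw [abs_mul] at h3
    have h4 := mul_le_mul_of_nonneg_left habs (abs_nonneg l)
    nlinarith
  calc (hcount p n α δ : ℝ) = ∑ _w : MeanWord p n α δ, (1 : ℝ) := by
        simp [hcount, Nat.card_eq_fintype_card]
    _ ≤ ∑ w : MeanWord p n α δ,
        Real.exp (n * (|l| * δ - l * α)) * Real.exp (l * ∑ i, ((w.1 i : ℕ) : ℝ)) :=
        Finset.sum_le_sum fun w _ => hword w
    _ ≤ ∑ w : Fin n → Fin p,
        Real.exp (n * (|l| * δ - l * α)) * Real.exp (l * ∑ i, ((w i : ℕ) : ℝ)) := by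
        refine (Finset.sum_map Finset.univ (Function.Embedding.subtype _)
          fun w : Fin n → Fin p => Real.exp (n * (|l| * δ - l * α)) *
            Real.exp (l * ∑ i, ((w i : ℕ) : ℝ))).symm.le.trans ?_
        exact Finset.sum_le_univ_sum_of_nonneg fun _ => by positivity
    _ = Real.exp (n * (gibbsEntropy p l α + |l| * δ)) := by
        rw [← Finset.mul_sum, hsum, ← Real.exp_log hZ, ← Real.exp_nat_mul, ← Real.exp_add,
          gibbsEntropy]
        congr 1
        ring

lemma entropy_le_gibbsEntropy_div {p : ℕ} (hp : 2 ≤ p) {α : ℝ} (hα : 0 ≤ α)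
    (hα' : α ≤ (p : ℝ) - 1) (l : ℝ) : entropy p α ≤ gibbsEntropy p l α / Real.log p := by
  have hp0 : 0 < p := by omega
  have hlp := log_natCast_pos hp
  have hH := gibbsEntropy_nonneg hp0 l hα hα'
  have key : ∀ δ > 0, entropy p α ≤ (gibbsEntropy p l α + |l| * δ) / Real.log p := by
    intro δ hδ
    refine (entropy_le_limsup hp α hδ).trans
      (limsup_le_of_le (isCoboundedUnder_hrate p α δ) ?_)
    filter_upwards [eventually_gt_atTop 0] with n hn
    have hn' : (0 : ℝ) < n := by exact_mod_cast hn
    rw [hrate, div_le_div_iff₀ (by positivity) hlp]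
    have hlog : Real.log (hcount p n α δ) ≤ n * (gibbsEntropy p l α + |l| * δ) := by
      rcases Nat.eq_zero_or_pos (hcount p n α δ) with h | h
      · rw [h]; simp; positivity
      · rw [Real.log_le_iff_le_exp (by exact_mod_cast h)]
        exact hcount_le_exp hp0 l α δ n
    nlinarith [mul_le_mul_of_nonneg_right hlog hlp.le]
  have hlim : Tendsto (fun δ : ℝ => (gibbsEntropy p l α + |l| * δ) / Real.log p)
      (nhdsWithin 0 (Ioi 0)) (nhds ((gibbsEntropy p l α + |l| * 0) / Real.log p)) :=
    (Continuous.tendsto (by fun_prop) 0).mono_left nhdsWithin_le_nhds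
  have := ge_of_tendsto hlim (eventually_mem_nhdsWithin.mono key)
  simpa using this

lemma tendsto_sum_mul_exp_atTop {ι : Type*} [Fintype ι] [DecidableEq ι] (c e : ι → ℝ) (k : ι)
    (hk : e k = 0) (he : ∀ j, j ≠ k → e j < 0) :
    Tendsto (fun l : ℝ => ∑ j, c j * Real.exp (l * e j)) atTop (nhds (c k)) := by
  have h : Tendsto (fun l : ℝ => ∑ j, c j * Real.exp (l * e j)) atTop
      (nhds (∑ j, if j = k then c j else 0)) := by
    refine tendsto_finsetSum _ fun j _ => ?_
    split_ifs with hj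
    · simp [hj, hk]
    · have h1 := Real.tendsto_exp_atBot.comp (tendsto_id.atTop_mul_const_of_neg (he j hj))
      simpa using h1.const_mul (c j)
  simpa using h

lemma tendsto_sum_mul_exp_neg {p : ℕ} (hp : 0 < p) (c : Fin p → ℝ) :
    Tendsto (fun l : ℝ => ∑ j : Fin p, c j * Real.exp (l * -((j : ℕ) : ℝ))) atTop
      (nhds (c ⟨0, hp⟩)) := by
  refine tendsto_sum_mul_exp_atTop c _ _ (by simp) fun j hj => ?_
  have : 0 < (j : ℕ) := Nat.pos_of_ne_zero fun h => hj (Fin.ext h)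
  simpa using this

lemma tendsto_sum_mul_exp_sub_last {p : ℕ} (hp : 0 < p) (c : Fin p → ℝ) :
    Tendsto (fun l : ℝ => ∑ j : Fin p, c j * Real.exp (l * (((j : ℕ) : ℝ) - (p - 1)))) atTop
      (nhds (c ⟨p - 1, by omega⟩)) := by
  refine tendsto_sum_mul_exp_atTop c _ _ (by simp [Nat.cast_sub (show 1 ≤ p by omega)])
    fun j hj => ?_
  have h1 : (j : ℕ) + 1 < p := by
    have := j.isLt
    have : (j : ℕ) ≠ p - 1 := fun h => hj (Fin.ext h)
    omega
  have h2 : ((j : ℕ) : ℝ) + 1 < p := by exact_mod_cast h1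
  linarith

lemma exists_sum_sub_mul_exp_eq_zero {p : ℕ} {α : ℝ} (hα : 0 < α) (hα' : α < (p : ℝ) - 1) :
    ∃ l : ℝ, ∑ j : Fin p, (((j : ℕ) : ℝ) - α) * Real.exp (l * (j : ℕ)) = 0 := by
  have hp : 0 < p := by
    have : (0 : ℝ) < p := by linarith
    exact_mod_cast this
  have hcont : Continuous fun l : ℝ =>
      ∑ j : Fin p, (((j : ℕ) : ℝ) - α) * Real.exp (l * (j : ℕ)) := by fun_prop
  refine mem_range_of_exists_le_of_exists_ge hcont ?_ ?_
  · obtain ⟨l, hl⟩ := ((tendsto_sum_mul_exp_neg hp fun j => ((j : ℕ) : ℝ) - α).eventually_lt_const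
      (show ((0 : ℕ) : ℝ) - α < 0 by simpa using hα)).exists
    exact ⟨-l, by simpa using hl.le⟩
  · obtain ⟨l, hl⟩ := ((tendsto_sum_mul_exp_sub_last hp
      fun j => ((j : ℕ) : ℝ) - α).eventually_const_lt
      (show 0 < ((p - 1 : ℕ) : ℝ) - α by
        rw [Nat.cast_sub (show 1 ≤ p by omega)]; simpa using hα')).exists
    refine ⟨l, ?_⟩
    simp_rw [mul_sub l, sub_eq_add_neg (l * _), Real.exp_add, ← mul_assoc, ← Finset.sum_mul] at hl
    exact (pos_of_mul_pos_left hl (Real.exp_pos _).le).le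

lemma entropy_nonpos_of_tendsto {p : ℕ} (hp : 2 ≤ p) {α : ℝ} (hα : 0 ≤ α)
    (hα' : α ≤ (p : ℝ) - 1) {f : ℝ → ℝ}
    (h : Tendsto (fun l => ∑ j : Fin p, (1 : ℝ) * Real.exp (f l * (((j : ℕ) : ℝ) - α))) atTop
      (nhds 1)) : entropy p α ≤ 0 := by
  have hp0 : 0 < p := by omega
  have hlog : Tendsto (fun l => gibbsEntropy p (f l) α / Real.log p) atTop (nhds 0) := by
    have h1 := (h.log one_ne_zero).div_const (Real.log p)
    rw [Real.log_one, zero_div] at h1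
    refine h1.congr fun l => ?_
    simp_rw [one_mul, mul_sub, sub_eq_add_neg (f l * _), Real.exp_add]
    rw [← Finset.sum_mul, ← digitPartition,
      Real.log_mul (digitPartition_pos hp0 _).ne' (Real.exp_pos _).ne', Real.log_exp, gibbsEntropy,
      sub_eq_add_neg]
  exact ge_of_tendsto' hlog fun l => entropy_le_gibbsEntropy_div hp hα hα' (f l)

lemma entropy_zero_nonpos {p : ℕ} (hp : 2 ≤ p) : entropy p 0 ≤ 0 := by
  have hpR : (2 : ℝ) ≤ p := by exact_mod_cast hp
  refine entropy_nonpos_of_tendsto hp le_rfl (by linarith) (f := fun l => -l) ?_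
  simpa using tendsto_sum_mul_exp_neg (p := p) (by omega) fun _ => 1

lemma entropy_sub_one_nonpos {p : ℕ} (hp : 2 ≤ p) : entropy p ((p : ℝ) - 1) ≤ 0 := by
  have hpR : (2 : ℝ) ≤ p := by exact_mod_cast hp
  exact entropy_nonpos_of_tendsto hp (by linarith) le_rfl (f := fun l => l)
    (tendsto_sum_mul_exp_sub_last (by omega) fun _ => 1)

/-- The integer with base-`p` digits `ω 0, …, ω (n - 1)`, most significant digit first. -/
def prefixValue {p : ℕ} (ω : ℕ → Fin p) : ℕ → ℕ
  | 0 => 0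
  | n + 1 => p * prefixValue ω n + ω n

lemma eq_of_prefixValue_eq {p : ℕ} {ω ω' : ℕ → Fin p} {n : ℕ}
    (h : prefixValue ω n = prefixValue ω' n) : ∀ i < n, ω i = ω' i := by
  induction n with
  | zero => intro i hi; omega
  | succ n ih =>
    simp only [prefixValue] at h
    have hlast : (ω n : ℕ) = ω' n := by
      have := congrArg (· % p) h
      simpa [Nat.mul_add_mod, Nat.mod_eq_of_lt (ω n).isLt, Nat.mod_eq_of_lt (ω' n).isLt] using this
    have hinit : prefixValue ω n = prefixValue ω' n := by
      rw [hlast] at h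
      exact Nat.eq_of_mul_eq_mul_left (Fin.pos (ω 0)) (Nat.add_right_cancel h)
    intro i hi
    rcases Nat.lt_succ_iff_lt_or_eq.1 hi with hi | rfl
    · exact ih hinit i hi
    · exact Fin.ext hlast

lemma sum_ofDigitsTerm_mul_pow {p : ℕ} (ω : ℕ → Fin p) (n : ℕ) :
    (∑ i ∈ Finset.range n, Real.ofDigitsTerm ω i) * (p : ℝ) ^ n = prefixValue ω n := by
  have hp : (p : ℝ) ≠ 0 := by exact_mod_cast (Fin.pos (ω 0)).ne'
  induction n with
  | zero => simp [prefixValue]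
  | succ n ih =>
    rw [Finset.sum_range_succ, add_mul, pow_succ', mul_left_comm, ih, Real.ofDigitsTerm, pow_succ',
      inv_mul_cancel_right₀ (mul_ne_zero hp (pow_ne_zero n hp))]
    simp [prefixValue]

lemma ofDigits_pos {p : ℕ} {ω : ℕ → Fin p} {m : ℕ} (hm : (ω m : ℕ) ≠ 0) :
    0 < Real.ofDigits ω := by
  have hp : (0 : ℝ) < p := by exact_mod_cast Fin.pos (ω 0)
  have hω : (0 : ℝ) < (ω m : ℕ) := by exact_mod_cast Nat.pos_of_ne_zero hm
  refine Real.summable_ofDigitsTerm.tsum_pos (fun _ => Real.ofDigitsTerm_nonneg) m ?_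
  rw [Real.ofDigitsTerm]
  positivity

lemma ceil_ofDigits_mul_pow {p : ℕ} {ω : ℕ → Fin p} (hω : ∀ n, ∃ m ≥ n, (ω m : ℕ) ≠ 0) (n : ℕ) :
    ⌈Real.ofDigits ω * (p : ℝ) ^ n⌉ = prefixValue ω n + 1 := by
  have hp : (p : ℝ) ≠ 0 := by exact_mod_cast (Fin.pos (ω 0)).ne'
  obtain ⟨m, hm, hm0⟩ := hω n
  have hpos : 0 < Real.ofDigits fun i => ω (i + n) :=
    ofDigits_pos (m := m - n) (by rwa [Nat.sub_add_cancel hm])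
  have hle := Real.ofDigits_le_one fun i => ω (i + n)
  rw [Real.ofDigits_eq_sum_add_ofDigits ω n, add_mul, sum_ofDigitsTerm_mul_pow, mul_right_comm,
    inv_mul_cancel₀ (pow_ne_zero n hp), one_mul, Int.ceil_natCast_add,
    ceil_eq_one_of_mem_Ioc ⟨hpos, hle⟩]

lemma padicDigit_ofDigits {p : ℕ} {ω : ℕ → Fin p} (hω : ∀ n, ∃ m ≥ n, (ω m : ℕ) ≠ 0) (n : ℕ) :
    padicDigit p (Real.ofDigits ω) n = ((ω n : ℕ) : ℤ) := by
  rw [padicDigit, ceil_ofDigits_mul_pow hω, ceil_ofDigits_mul_pow hω, prefixValue]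
  push_cast
  ring

/-- The sum of the first `n` digits of `ω`. -/
def digitSum {p : ℕ} (ω : ℕ → Fin p) (n : ℕ) : ℝ := ∑ i ∈ Finset.range n, ((ω i : ℕ) : ℝ)

/-- The digit sequences with arithmetic mean `α`. -/
def meanSequences (p : ℕ) (α : ℝ) : Set (ℕ → Fin p) :=
  {ω | Tendsto (fun n : ℕ => digitSum ω n / n) atTop (nhds α)}

lemma exists_digit_ne_zero {p : ℕ} {α : ℝ} (hα : 0 < α) {ω : ℕ → Fin p}
    (hω : ω ∈ meanSequences p α) (n : ℕ) : ∃ m ≥ n, (ω m : ℕ) ≠ 0 := by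
  by_contra! h
  refine hα.ne' (tendsto_nhds_unique hω ?_)
  refine (tendsto_const_div_atTop_nhds_zero_nat (digitSum ω n)).congr' ?_
  filter_upwards [eventually_ge_atTop n] with k hk
  congr 1
  refine Finset.sum_subset (Finset.range_mono hk) fun i _ hi => ?_
  rw [h i (by simpa using hi), Nat.cast_zero]

lemma ofDigits_mem_digitMeanLevelSet {p : ℕ} {α : ℝ} (hα : 0 < α) {ω : ℕ → Fin p}
    (hω : ω ∈ meanSequences p α) : Real.ofDigits ω ∈ digitMeanLevelSet p α := by
  refine ⟨⟨Real.ofDigits_nonneg ω, Real.ofDigits_le_one ω⟩, ?_⟩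
  have hmsum : ∀ n, (msum p (Real.ofDigits ω) 0 n : ℝ) = digitSum ω n := fun n => by
    simp [msum, digitSum, padicDigit_ofDigits (exists_digit_ne_zero hα hω)]
  simp_rw [hmsum]
  exact hω

/-- The probability weights on digits proportional to `e^{lj}`. -/
def gibbsPMF {p : ℕ} (hp : 0 < p) (l : ℝ) : PMF (Fin p) :=
  PMF.ofFintype (fun j => ENNReal.ofReal (Real.exp (l * (j : ℕ)) / digitPartition p l)) <| by
    have hZ := digitPartition_pos hp l
    rw [← ENNReal.ofReal_sum_of_nonneg fun _ _ => by positivity, ← Finset.sum_div,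
      ← digitPartition, div_self hZ.ne', ENNReal.ofReal_one]

/-- The law of a sequence of independent digits with distribution `gibbsPMF`. -/
def gibbsMeasure {p : ℕ} (hp : 0 < p) (l : ℝ) : Measure (ℕ → Fin p) :=
  Measure.infinitePi fun _ => (gibbsPMF hp l).toMeasure

instance {p : ℕ} (hp : 0 < p) (l : ℝ) : IsProbabilityMeasure (gibbsMeasure hp l) := by
  unfold gibbsMeasure
  infer_instance

/-- The `gibbsMeasure` of the cylinder of length `n` around `ω`. -/
def cylinderWeight {p : ℕ} (l : ℝ) (ω : ℕ → Fin p) (n : ℕ) : ℝ :=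
  Real.exp (l * digitSum ω n - n * Real.log (digitPartition p l))

lemma gibbsMeasure_cylinder {p : ℕ} (hp : 0 < p) (l : ℝ) (ω : ℕ → Fin p) (n : ℕ) :
    gibbsMeasure hp l {ω' | ∀ i < n, ω' i = ω i} = ENNReal.ofReal (cylinderWeight l ω n) := by
  have hZ := digitPartition_pos hp l
  have hset : {ω' : ℕ → Fin p | ∀ i < n, ω' i = ω i} =
      Set.pi (Finset.range n) fun i => {ω i} := by
    ext; simp
  rw [hset, gibbsMeasure, Measure.infinitePi_pi _ fun _ _ => measurableSet_singleton _]
  simp_rw [PMF.toMeasure_apply_singleton _ _ (measurableSet_singleton _), gibbsPMF,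
    PMF.ofFintype_apply]
  rw [← ENNReal.ofReal_prod_of_nonneg fun _ _ => by positivity, Finset.prod_div_distrib,
    ← Real.exp_sum, Finset.prod_const, Finset.card_range, cylinderWeight, Real.exp_sub,
    Real.exp_nat_mul, Real.exp_log hZ, digitSum, Finset.mul_sum]

lemma integral_gibbsPMF {p : ℕ} (hp : 0 < p) {l α : ℝ}
    (h : ∑ j : Fin p, (((j : ℕ) : ℝ) - α) * Real.exp (l * (j : ℕ)) = 0) :
    ∫ j, ((j : ℕ) : ℝ) ∂(gibbsPMF hp l).toMeasure = α := by
  have hZ := digitPartition_pos hp l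
  simp_rw [sub_mul, Finset.sum_sub_distrib, ← Finset.mul_sum] at h
  rw [← digitPartition] at h
  rw [PMF.integral_eq_sum]
  simp_rw [gibbsPMF, PMF.ofFintype_apply, smul_eq_mul]
  have hterm : ∀ j : Fin p,
      (ENNReal.ofReal (Real.exp (l * (j : ℕ)) / digitPartition p l)).toReal * ((j : ℕ) : ℝ) =
        ((j : ℕ) : ℝ) * Real.exp (l * (j : ℕ)) / digitPartition p l := fun j => by
    rw [ENNReal.toReal_ofReal (by positivity)]
    ring
  simp_rw [hterm]
  rw [← Finset.sum_div, div_eq_iff hZ.ne']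
  linarith

lemma ae_mem_meanSequences {p : ℕ} (hp : 0 < p) {l α : ℝ}
    (h : ∑ j : Fin p, (((j : ℕ) : ℝ) - α) * Real.exp (l * (j : ℕ)) = 0) :
    ∀ᵐ ω ∂gibbsMeasure hp l, ω ∈ meanSequences p α := by
  have hval : Measurable fun j : Fin p => ((j : ℕ) : ℝ) := measurable_of_countable _
  have hlaw : ∀ i, MeasurePreserving (Function.eval i) (gibbsMeasure hp l)
      (gibbsPMF hp l).toMeasure := fun i =>
    measurePreserving_eval_infinitePi (fun _ => (gibbsPMF hp l).toMeasure) i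
  have hind : ProbabilityTheory.iIndepFun (fun (i : ℕ) (ω : ℕ → Fin p) => ((ω i : ℕ) : ℝ))
      (gibbsMeasure hp l) :=
    ProbabilityTheory.iIndepFun_infinitePi (P := fun _ => (gibbsPMF hp l).toMeasure)
      (X := fun _ j => ((j : ℕ) : ℝ)) fun _ => hval
  have hlln := ProbabilityTheory.strong_law_ae_real (μ := gibbsMeasure hp l)
    (fun i ω => ((ω i : ℕ) : ℝ))
    ((hlaw 0).integrable_comp_of_integrable (g := fun j : Fin p => ((j : ℕ) : ℝ)) .of_finite)
    (fun i j hij => hind.indepFun hij)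
    (fun i => ⟨(hval.comp (hlaw i).measurable).aemeasurable,
      (hval.comp (hlaw 0).measurable).aemeasurable, by
      have hmap : ∀ k, Measure.map (fun ω : ℕ → Fin p => ((ω k : ℕ) : ℝ)) (gibbsMeasure hp l) =
          Measure.map (fun j : Fin p => ((j : ℕ) : ℝ)) (gibbsPMF hp l).toMeasure := fun k => by
        rw [← (hlaw k).map_eq, Measure.map_map hval (hlaw k).measurable]
        rfl
      rw [hmap, hmap]⟩)
  have hmean : ∫ ω, ((ω 0 : ℕ) : ℝ) ∂gibbsMeasure hp l = α := by
    rw [← integral_gibbsPMF hp h, ← (hlaw 0).map_eq,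
      integral_map (hlaw 0).measurable.aemeasurable hval.aestronglyMeasurable]
  rw [hmean] at hlln
  exact hlln

/-- The sequences of mean `α` whose cylinders have mass at most `K` times the `t`-th power of
their diameter. -/
def frostmanSequences (p : ℕ) (l α t : ℝ) (K : ℕ) : Set (ℕ → Fin p) :=
  {ω | ω ∈ meanSequences p α ∧ ∀ n : ℕ, cylinderWeight l ω n ≤ K * (((p : ℝ) ^ n)⁻¹) ^ t}

lemma exists_mem_frostmanSequences {p : ℕ} (hp : 0 < p) {l α t : ℝ}
    (ht : t * Real.log p < gibbsEntropy p l α) {ω : ℕ → Fin p} (hω : ω ∈ meanSequences p α) :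
    ∃ K, ω ∈ frostmanSequences p l α t K := by
  have hpR : (0 : ℝ) < p := by exact_mod_cast hp
  set f : ℕ → ℝ := fun n =>
    Real.exp (l * digitSum ω n - n * Real.log (digitPartition p l) + n * (t * Real.log p)) with hf
  have hlim : Tendsto (fun n : ℕ => l * (digitSum ω n / n) - Real.log (digitPartition p l) +
      t * Real.log p) atTop (nhds (l * α - Real.log (digitPartition p l) + t * Real.log p)) :=
    ((hω.const_mul l).sub_const _).add_const _
  have hev : ∀ᶠ n in atTop, f n ≤ 1 := by
    rw [gibbsEntropy] at ht
    filter_upwards [hlim.eventually_lt_const (u := 0) (by linarith), eventually_gt_atTop 0]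
      with n hn hn0
    have hn0' : (0 : ℝ) < n := by exact_mod_cast hn0
    rw [hf, Real.exp_le_one_iff]
    calc l * digitSum ω n - n * Real.log (digitPartition p l) + n * (t * Real.log p)
        = n * (l * (digitSum ω n / n) - Real.log (digitPartition p l) + t * Real.log p) := by
          field_simp
      _ ≤ 0 := mul_nonpos_of_nonneg_of_nonpos hn0'.le hn.le
  obtain ⟨B, hB⟩ := IsBoundedUnder.bddAbove_range ⟨1, eventually_map.2 hev⟩
  obtain ⟨K, hK⟩ := exists_nat_ge B
  refine ⟨K, hω, fun n => ?_⟩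
  have hfn : f n ≤ K := (hB ⟨n, rfl⟩).trans hK
  have hpow : (((p : ℝ) ^ n)⁻¹) ^ t = Real.exp (-(n * (t * Real.log p))) := by
    rw [Real.rpow_def_of_pos (by positivity), Real.log_inv, Real.log_pow]
    congr 1
    ring
  simp only [hf, Real.exp_add] at hfn
  rw [hpow, Real.exp_neg, ← div_eq_mul_inv, le_div_iff₀ (Real.exp_pos _)]
  exact hfn

lemma gibbsMeasure_fiber_le {p : ℕ} (hp : 0 < p) {l α t : ℝ} (hα : 0 < α) (K n : ℕ) (k : ℤ) :
    gibbsMeasure hp l {ω | ω ∈ frostmanSequences p l α t K ∧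
      ⌈Real.ofDigits ω * (p : ℝ) ^ n⌉ = k} ≤ ENNReal.ofReal (K * (((p : ℝ) ^ n)⁻¹) ^ t) := by
  rcases Set.eq_empty_or_nonempty {ω : ℕ → Fin p | ω ∈ frostmanSequences p l α t K ∧
      ⌈Real.ofDigits ω * (p : ℝ) ^ n⌉ = k} with h | ⟨ω, hω, hk⟩
  · simp [h]
  · refine (measure_mono ?_).trans ((gibbsMeasure_cylinder hp l ω n).le.trans
      (ENNReal.ofReal_le_ofReal (hω.2 n)))
    rintro ω' ⟨hω', hk'⟩
    rw [← hk, ceil_ofDigits_mul_pow (exists_digit_ne_zero hα hω'.1),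
      ceil_ofDigits_mul_pow (exists_digit_ne_zero hα hω.1)] at hk'
    exact eq_of_prefixValue_eq (by exact_mod_cast add_right_cancel hk')

/-- The restriction of the Gibbs measure to `frostmanSequences`, transported to the real line. -/
def frostmanMeasure {p : ℕ} (hp : 0 < p) (l α t : ℝ) (K : ℕ) : Measure ℝ :=
  ((gibbsMeasure hp l).restrict (frostmanSequences p l α t K)).map Real.ofDigits

lemma measurable_ofDigits (p : ℕ) : Measurable (Real.ofDigits (b := p)) :=
  Real.continuous_ofDigits.measurable

lemma frostmanMeasure_le_of_ediam_le {p : ℕ} (hp : 0 < p) {l α t : ℝ} (hα : 0 < α) (K n : ℕ)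
    {U : Set ℝ} (hU : Metric.ediam U ≤ ENNReal.ofReal (((p : ℝ) ^ n)⁻¹)) :
    frostmanMeasure hp l α t K U ≤ 3 * ENNReal.ofReal (K * (((p : ℝ) ^ n)⁻¹) ^ t) := by
  have hpn : (0 : ℝ) < (p : ℝ) ^ n := by positivity
  rw [← Metric.ediam_closure] at hU
  refine (measure_mono subset_closure).trans ?_
  rw [frostmanMeasure, Measure.map_apply (measurable_ofDigits p) isClosed_closure.measurableSet,
    Measure.restrict_apply (measurable_ofDigits p isClosed_closure.measurableSet)]
  rcases Set.eq_empty_or_nonempty (closure U) with h | ⟨x, hx⟩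
  · simp [h]
  have hcov : Real.ofDigits ⁻¹' closure U ∩ frostmanSequences p l α t K ⊆
      ⋃ c ∈ Finset.Icc (⌈x * (p : ℝ) ^ n⌉ - 1) (⌈x * (p : ℝ) ^ n⌉ + 1),
        {ω | ω ∈ frostmanSequences p l α t K ∧ ⌈Real.ofDigits ω * (p : ℝ) ^ n⌉ = c} := by
    rintro ω ⟨hωU, hω⟩
    have hdist := (Metric.edist_le_ediam_of_mem (mem_preimage.1 hωU) hx).trans hU
    rw [edist_dist, ENNReal.ofReal_le_ofReal_iff (by positivity), Real.dist_eq, inv_eq_one_div,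
      le_div_iff₀ hpn, ← abs_of_pos hpn, ← abs_mul, sub_mul, abs_le] at hdist
    simp only [mem_iUnion, Finset.mem_Icc]
    refine ⟨_, ⟨?_, ?_⟩, hω, rfl⟩
    · rw [sub_le_iff_le_add, Int.ceil_le]
      push_cast
      linarith [Int.le_ceil (Real.ofDigits ω * (p : ℝ) ^ n)]
    · rw [Int.ceil_le]
      push_cast
      linarith [Int.le_ceil (x * (p : ℝ) ^ n)]
  refine (measure_mono hcov).trans ((measure_biUnion_finset_le _ _).trans
    ((Finset.sum_le_card_nsmul _ _ _ fun c _ => gibbsMeasure_fiber_le hp hα K n c).trans_eq ?_))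
  rw [Int.card_Icc, nsmul_eq_mul, show ⌈x * (p : ℝ) ^ n⌉ + 1 + 1 - (⌈x * (p : ℝ) ^ n⌉ - 1) = 3 by
    ring]
  rfl

lemma frostmanMeasure_le_ediam_rpow {p : ℕ} (hp : 2 ≤ p) {l α t : ℝ} (hα : 0 < α) (ht : 0 < t)
    (K : ℕ) {U : Set ℝ} (hU : Metric.ediam U ≤ 1) :
    frostmanMeasure (by omega : 0 < p) l α t K U ≤
      ENNReal.ofReal (3 * K * (p : ℝ) ^ t) * Metric.ediam U ^ t := by
  have hp0 : 0 < p := by omega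
  have hpR : (1 : ℝ) < p := by exact_mod_cast hp
  have hfin : Metric.ediam U ≠ ⊤ := (hU.trans_lt ENNReal.one_lt_top).ne
  rcases eq_or_ne (Metric.ediam U) 0 with h0 | h0
  · have hlim : Tendsto (fun n : ℕ => 3 * ENNReal.ofReal (K * (((p : ℝ) ^ n)⁻¹) ^ t)) atTop
        (nhds (3 * ENNReal.ofReal (K * (0 : ℝ) ^ t))) := by
      refine ENNReal.Tendsto.const_mul (ENNReal.tendsto_ofReal ?_) (Or.inr (by simp))
      refine Tendsto.const_mul _ ?_
      exact ((Real.continuousAt_rpow_const 0 t (Or.inr ht.le)).tendsto).comp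
        (tendsto_inv_atTop_zero.comp (tendsto_pow_atTop_atTop_of_one_lt hpR))
    rw [Real.zero_rpow ht.ne', mul_zero, ENNReal.ofReal_zero, mul_zero] at hlim
    refine (ge_of_tendsto' hlim fun n => ?_).trans bot_le
    exact frostmanMeasure_le_of_ediam_le hp0 hα K n (by rw [h0]; exact bot_le)
  · set d := (Metric.ediam U).toReal with hd
    have hUd : Metric.ediam U = ENNReal.ofReal d := (ENNReal.ofReal_toReal hfin).symm
    have hdpos : 0 < d := ENNReal.toReal_pos h0 hfin
    have hd1 : d ≤ 1 := by simpa using ENNReal.toReal_mono ENNReal.one_ne_top hU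
    obtain ⟨n, hn1, hn2⟩ := exists_nat_pow_near_of_lt_one hdpos hd1 (inv_pos.2 (by positivity))
      (inv_lt_one_of_one_lt₀ hpR)
    rw [inv_pow] at hn1 hn2
    refine (frostmanMeasure_le_of_ediam_le hp0 hα K n
      (by rw [hUd]; exact ENNReal.ofReal_le_ofReal hn2)).trans ?_
    rw [hUd, ENNReal.ofReal_rpow_of_pos hdpos, ← ENNReal.ofReal_mul (by positivity),
      ← ENNReal.ofReal_ofNat 3, ← ENNReal.ofReal_mul (by positivity)]
    refine ENNReal.ofReal_le_ofReal ?_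
    rw [mul_assoc 3, mul_assoc 3, mul_assoc, ← Real.mul_rpow (by positivity) hdpos.le]
    have hle : ((p : ℝ) ^ n)⁻¹ ≤ p * d := by
      rw [pow_succ', mul_inv, inv_mul_lt_iff₀ (by positivity)] at hn1
      exact hn1.le
    gcongr

lemma le_dimH_digitMeanLevelSet_of_lt {p : ℕ} (hp : 2 ≤ p) {l α : ℝ} (hα : 0 < α)
    (h : ∑ j : Fin p, (((j : ℕ) : ℝ) - α) * Real.exp (l * (j : ℕ)) = 0) {t : NNReal} (ht : 0 < t)
    (htH : t * Real.log p < gibbsEntropy p l α) : t ≤ dimH (digitMeanLevelSet p α) := by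
  have hp0 : 0 < p := by omega
  obtain ⟨K, hK⟩ : ∃ K, gibbsMeasure hp0 l (frostmanSequences p l α t K) ≠ 0 := by
    by_contra! hnull
    have hae := ae_mem_meanSequences hp0 h
    have hnull' : gibbsMeasure hp0 l (⋃ K, frostmanSequences p l α t K) = 0 :=
      measure_iUnion_null hnull
    have huniv : ∀ᵐ ω ∂gibbsMeasure hp0 l, ω ∈ ⋃ K, frostmanSequences p l α t K :=
      hae.mono fun ω hω => mem_iUnion.2 (exists_mem_frostmanSequences hp0 htH hω)
    obtain ⟨ω, hω, hω'⟩ := (huniv.and (measure_eq_zero_iff_ae_notMem.1 hnull')).exists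
    exact hω' hω
  set C := ENNReal.ofReal (3 * K * (p : ℝ) ^ (t : ℝ)) with hC
  have hK0 : K ≠ 0 := by
    rintro rfl
    obtain ⟨ω, hω⟩ := nonempty_of_measure_ne_zero hK
    have hexp := hω.2 0
    rw [Nat.cast_zero, zero_mul] at hexp
    exact absurd hexp (not_le.2 (Real.exp_pos _))
  have hC0 : C ≠ 0 := by
    rw [hC, Ne, ENNReal.ofReal_eq_zero, not_le]
    positivity
  have hle : C⁻¹ • frostmanMeasure hp0 l α t K ≤ μH[(t : ℝ)] := by
    refine Measure.le_hausdorffMeasure _ _ 1 one_pos fun U hU => ?_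
    rw [Measure.smul_apply, smul_eq_mul, mul_comm, ← div_eq_mul_inv]
    exact ENNReal.div_le_of_le_mul' (frostmanMeasure_le_ediam_rpow hp hα (by exact_mod_cast ht) K hU)
  refine le_dimH_of_hausdorffMeasure_ne_zero fun hzero => hK ?_
  have hν := le_antisymm ((hle (digitMeanLevelSet p α)).trans_eq hzero) bot_le
  rw [Measure.smul_apply, smul_eq_mul, mul_eq_zero, ENNReal.inv_eq_zero] at hν
  have hν' := hν.resolve_left ENNReal.ofReal_ne_top
  have h1 := Measure.le_map_apply (μ := (gibbsMeasure hp0 l).restrict (frostmanSequences p l α t K))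
    (measurable_ofDigits p).aemeasurable (digitMeanLevelSet p α)
  have h2 := Measure.le_restrict_apply (μ := gibbsMeasure hp0 l) (frostmanSequences p l α t K)
    (Real.ofDigits ⁻¹' digitMeanLevelSet p α)
  refine le_antisymm ((measure_mono fun ω hω => ?_).trans (h2.trans (h1.trans_eq hν'))) bot_le
  exact ⟨ofDigits_mem_digitMeanLevelSet hα hω.1, hω⟩

lemma entropy_le_dimH_digitMeanLevelSet {p : ℕ} (hp : 2 ≤ p) {α : ℝ} (hα : 0 ≤ α)
    (hα' : α ≤ (p : ℝ) - 1) : ENNReal.ofReal (entropy p α) ≤ dimH (digitMeanLevelSet p α) := by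
  rcases hα.eq_or_lt with rfl | hα0
  · simp [ENNReal.ofReal_of_nonpos (entropy_zero_nonpos hp)]
  rcases hα'.eq_or_lt with rfl | hα1
  · simp [ENNReal.ofReal_of_nonpos (entropy_sub_one_nonpos hp)]
  obtain ⟨l, hl⟩ := exists_sum_sub_mul_exp_eq_zero hα0 hα1
  refine le_of_forall_lt_imp_le_of_dense fun a ha => ?_
  obtain ⟨t, hat, ht⟩ := ENNReal.lt_iff_exists_nnreal_btwn.1 ha
  have ht0 : 0 < t := ENNReal.coe_pos.1 (bot_le.trans_lt hat)
  refine hat.le.trans (le_dimH_digitMeanLevelSet_of_lt hp hα0 hl ht0 ?_)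
  rw [← lt_div_iff₀ (log_natCast_pos hp)]
  rw [← ENNReal.ofReal_coe_nnreal] at ht
  exact (ENNReal.ofReal_lt_ofReal_iff'.1 ht).1.trans_le (entropy_le_gibbsEntropy_div hp hα hα' l)

/-- For an integer `p ≥ 2` and `0 ≤ α ≤ p-1`, `dim_H E(α) = h(α)`. -/
theorem dimH_digitMeanLevelSet (p : ℕ) (hp : 2 ≤ p) (α : ℝ)
    (hα : 0 ≤ α) (hα' : α ≤ (p : ℝ) - 1) :
    dimH (digitMeanLevelSet p α) = ENNReal.ofReal (entropy p α) := by
  exact le_antisymm (dimH_digitMeanLevelSet_le hp α)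
    (entropy_le_dimH_digitMeanLevelSet hp hα hα')
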